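/- arXiv:2204.06865 — 2 statements merged into one kernel-verified Lean document; each statement's English description precedes it below -/
import Mathlib

section
/- Let A be a commutative noetherian ring and let E be a faithfully injective A-module. Then for every A-module M, the flat dimension of Hom_A(M, E) over A equals the injective dimension of M over A. -/
/-!
STATEMENT 10: Let A be a commutative noetherian ring and let E be a faithfully injective
A-module.  Then for every A-module M, the flat dimension of Hom_A(M, E) over A equals
the injective dimension of M over A.
-/

open CategoryTheory

universe u

/-- `Ext_A^i(M, N)` as an `A`-module. -/
noncomputable abbrev extGroup (A : Type u) [CommRing A] (M N : ModuleCat.{u} A) (i : ℕ) :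
    ModuleCat A :=
  ((Ext A (ModuleCat.{u} A) i).obj (Opposite.op M)).obj N

/-- The projective dimension of an `A`-module `M`, defined as the least `n : ℕ∞` such that
`Ext_A^i(M, N) = 0` for every `A`-module `N` and every `i > n` (and `∞` if no such `n` exists). -/
noncomputable def projDim (A : Type u) [CommRing A] (M : ModuleCat.{u} A) : ℕ∞ :=
  sInf {n : ℕ∞ | ∀ (N : ModuleCat.{u} A) (i : ℕ), n < (i : ℕ∞) →
    Subsingleton (extGroup A M N i)}

/-- `Tor^A_i(N, M)` as an `A`-module. -/
noncomputable abbrev torGroup (A : Type u) [CommRing A] (N M : ModuleCat.{u} A) (i : ℕ) :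
    ModuleCat A :=
  ((Tor (ModuleCat.{u} A) i).obj N).obj M

/-- The flat dimension of an `A`-module `M`, defined as the least `n : ℕ∞` such that
`Tor^A_i(N, M) = 0` for every `A`-module `N` and every `i > n` (and `∞` if no such `n` exists). -/
noncomputable def flatDim (A : Type u) [CommRing A] (M : ModuleCat.{u} A) : ℕ∞ :=
  sInf {n : ℕ∞ | ∀ (N : ModuleCat.{u} A) (i : ℕ), n < (i : ℕ∞) →
    Subsingleton (torGroup A N M i)}

/-- The injective dimension of an `A`-module `M`, defined as the least `n : ℕ∞` such that
`Ext_A^i(N, M) = 0` for every `A`-module `N` and every `i > n` (and `∞` if no such `n` exists). -/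
noncomputable def injDim (A : Type u) [CommRing A] (M : ModuleCat.{u} A) : ℕ∞ :=
  sInf {n : ℕ∞ | ∀ (N : ModuleCat.{u} A) (i : ℕ), n < (i : ℕ∞) →
    Subsingleton (extGroup A N M i)}

/-!
Over a noetherian ring, a finitely generated module `N` is finitely presented, so Hom evaluation
`N ⊗ Hom(M, E) → Hom(Hom(N, M), E)` is an isomorphism for `E` injective. As `E` is moreover
faithful, `Tor₁(N, Hom(M, E))` vanishes exactly when `Ext¹(N, M)` does, and dimension shifting
in `N` along finite free covers gives the same for `Torₙ` and `Extⁿ` with `n ≥ 1`. Finitely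
generated `N` suffice on both sides: on the `Ext` side by Baer's criterion and dimension shifting
in `M`; on the `Tor` side because every element of `N ⊗ P` comes from `N' ⊗ P` with `N' ≤ N`
finitely generated, and `N' ⊗ P → N ⊗ P` is injective for `P` projective.
-/

universe v w

open scoped TensorProduct

section HomEvaluation

variable (A F M E : Type*) [CommRing A] [AddCommGroup F] [Module A F] [AddCommGroup M]
  [Module A M] [AddCommGroup E] [Module A E]

/-- Hom evaluation `F ⊗ Hom(M, E) → Hom(Hom(F, M), E)`, sending `x ⊗ φ` to `g ↦ φ (g x)`. -/
noncomputable def homEvaluation : F ⊗[A] (M →ₗ[A] E) →ₗ[A] (F →ₗ[A] M) →ₗ[A] E :=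
  TensorProduct.lift ((LinearMap.llcomp A (F →ₗ[A] M) M E).flip ∘ₗ LinearMap.id.flip)

variable {A F M E} in
@[simp]
lemma homEvaluation_tmul (x : F) (φ : M →ₗ[A] E) (g : F →ₗ[A] M) :
    homEvaluation A F M E (x ⊗ₜ φ) g = φ (g x) := rfl

variable {A F} in
lemma homEvaluation_comp_rTensor {G : Type*} [AddCommGroup G] [Module A G] (f : F →ₗ[A] G) :
    homEvaluation A G M E ∘ₗ f.rTensor (M →ₗ[A] E) =
      LinearMap.lcomp A E (LinearMap.lcomp A M f) ∘ₗ homEvaluation A F M E :=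
  TensorProduct.ext' fun _ _ ↦ rfl

lemma homEvaluation_pi_bijective (ι : Type*) [Finite ι] :
    Function.Bijective (homEvaluation A (ι → A) M E) := by
  classical
  have := Fintype.ofFinite ι
  let e : (ι → A) ⊗[A] (M →ₗ[A] E) ≃ₗ[A] ((ι → A) →ₗ[A] M) →ₗ[A] E :=
    TensorProduct.comm A (ι → A) (M →ₗ[A] E) ≪≫ₗ
      TensorProduct.piScalarRight A A (M →ₗ[A] E) ι ≪≫ₗ
      LinearMap.lsum A (fun _ : ι ↦ M) A ≪≫ₗ
      (LinearEquiv.piRing A M ι A).symm.arrowCongr (LinearEquiv.refl A E)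
  suffices homEvaluation A (ι → A) M E = e from this ▸ e.bijective
  ext x φ g
  simp [e, LinearEquiv.arrowCongr_apply]

end HomEvaluation

section InjectiveModule

variable {A : Type u} [CommRing A] (E : Type v) [Small.{v} A] [AddCommGroup E] [Module A E]
  [Module.Injective A E]

lemma lcomp_exact_of_injective {X Y Z : Type*} [AddCommGroup X] [Module A X]
    [AddCommGroup Y] [Module A Y] [AddCommGroup Z] [Module A Z] {f : X →ₗ[A] Y} {g : Y →ₗ[A] Z}
    (h : Function.Exact f g) :
    Function.Exact (LinearMap.lcomp A E g) (LinearMap.lcomp A E f) := by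
  have hrange : Function.Exact f g.rangeRestrict := fun y ↦ by rw [← h y, Subtype.ext_iff]; rfl
  have hexact := LinearMap.exact_lcomp_of_exact_of_surjective E hrange g.surjective_rangeRestrict
  have hext : Function.Surjective (LinearMap.lcomp A E (LinearMap.range g).subtype) :=
    Module.Injective.extension_property A E _ _ _ Subtype.val_injective
  intro φ
  rw [hexact φ]
  exact hext.range_comp (LinearMap.lcomp A E g.rangeRestrict) ▸ Iff.rfl

lemma homEvaluation_bijective (F M : Type*) [AddCommGroup F] [Module A F]
    [Module.FinitePresentation A F] [AddCommGroup M] [Module A M] :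
    Function.Bijective (homEvaluation A F M E) := by
  obtain ⟨n, m, p, q, hp, hqp⟩ := Module.FinitePresentation.exists_fin' A F
  exact LinearMap.bijective_of_surjective_of_bijective_of_right_exact
    (q.rTensor (M →ₗ[A] E)) (p.rTensor (M →ₗ[A] E))
    (LinearMap.lcomp A E (LinearMap.lcomp A M q)) (LinearMap.lcomp A E (LinearMap.lcomp A M p))
    (homEvaluation A _ M E) (homEvaluation A _ M E) (homEvaluation A F M E)
    (homEvaluation_comp_rTensor M E q).symm (homEvaluation_comp_rTensor M E p).symm
    (rTensor_exact _ hqp hp)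
    (lcomp_exact_of_injective E (LinearMap.exact_lcomp_of_exact_of_surjective M hqp hp))
    (homEvaluation_pi_bijective A M E _).surjective (homEvaluation_pi_bijective A M E _)
    (LinearMap.rTensor_surjective _ hp)
    (Module.Injective.extension_property A E _ _ _ (LinearMap.lcomp_injective_of_surjective p hp))

end InjectiveModule

/-- An `A`-module `E` is faithfully injective if it is injective and `Hom(M, E) = 0` implies
`M = 0`; `M` ranges over the universe of `E`. -/
structure IsFaithfullyInjective (A : Type u) [CommRing A] (E : Type v) [AddCommGroup E]
    [Module A E] : Prop where
  injective : Module.Injective A E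
  subsingleton_of_hom : ∀ (M : Type v) [AddCommGroup M] [Module A M],
    Subsingleton (M →ₗ[A] E) → Subsingleton M

namespace IsFaithfullyInjective

variable {A : Type u} [CommRing A] {E : Type v} [AddCommGroup E] [Module A E]

lemma lcomp_injective_iff (hE : IsFaithfullyInjective A E) {X : Type*} {Y : Type v}
    [AddCommGroup X] [Module A X] [AddCommGroup Y] [Module A Y] (f : X →ₗ[A] Y) :
    Function.Injective (LinearMap.lcomp A E f) ↔ Function.Surjective f := by
  refine ⟨fun h ↦ ?_, LinearMap.lcomp_injective_of_surjective f⟩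
  have hcoker : Subsingleton ((Y ⧸ LinearMap.range f) →ₗ[A] E) := by
    refine subsingleton_of_forall_eq 0 fun φ ↦ ?_
    have : φ ∘ₗ (LinearMap.range f).mkQ = 0 := h <| by
      simp only [LinearMap.lcomp_apply', LinearMap.comp_assoc, LinearMap.range_mkQ_comp,
        LinearMap.comp_zero, LinearMap.zero_comp]
    exact (LinearMap.cancel_right (Submodule.mkQ_surjective _)).1 this
  rw [← LinearMap.range_eq_top, ← Submodule.Quotient.subsingleton_iff]
  exact hE.subsingleton_of_hom _ hcoker

lemma rTensor_hom_injective_iff [Small.{v} A] (hE : IsFaithfullyInjective A E) (M : Type v)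
    [AddCommGroup M] [Module A M] {K : Type v} {P : Type*} [AddCommGroup K] [Module A K]
    [Module.FinitePresentation A K] [AddCommGroup P] [Module A P] [Module.FinitePresentation A P]
    (f : K →ₗ[A] P) :
    Function.Injective (f.rTensor (M →ₗ[A] E)) ↔ Function.Surjective (LinearMap.lcomp A M f) := by
  have := hE.injective
  have hcomm : homEvaluation A P M E ∘ f.rTensor (M →ₗ[A] E) =
      LinearMap.lcomp A E (LinearMap.lcomp A M f) ∘ homEvaluation A K M E :=
    congrArg DFunLike.coe (homEvaluation_comp_rTensor M E f)
  rw [← hE.lcomp_injective_iff, ← (homEvaluation_bijective E P M).injective.of_comp_iff, hcomm,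
    Function.Injective.of_comp_iff' _ (homEvaluation_bijective E K M)]

end IsFaithfullyInjective

section ExtShift

variable {C : Type*} [Category* C] [Abelian C] [HasExt.{w} C] {S : ShortComplex C}

lemma subsingleton_ext_X₃_iff_ext_X₁ (hS : S.ShortExact) [Projective S.X₂] (Y : C) (n : ℕ) :
    Subsingleton (Abelian.Ext.{w} S.X₃ Y (n + 2)) ↔
      Subsingleton (Abelian.Ext.{w} S.X₁ Y (n + 1)) := by
  constructor <;> refine fun h ↦ subsingleton_of_forall_eq 0 fun x ↦ ?_
  · obtain ⟨y, rfl⟩ := Abelian.Ext.contravariant_sequence_exact₁ hS Y x (n₁ := n + 2) (by lia)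
      (Subsingleton.elim _ _)
    rw [y.eq_zero_of_projective, Abelian.Ext.comp_zero]
  · obtain ⟨y, rfl⟩ := Abelian.Ext.contravariant_sequence_exact₃ hS Y x
      (Abelian.Ext.eq_zero_of_projective _) (n₀ := n + 1) (by lia)
    rw [Subsingleton.elim y 0, Abelian.Ext.comp_zero]

lemma subsingleton_ext_X₃_one_iff_surjective (hS : S.ShortExact) [Projective S.X₂] (Y : C) :
    Subsingleton (Abelian.Ext.{w} S.X₃ Y 1) ↔ Function.Surjective fun ψ : S.X₂ ⟶ Y ↦ S.f ≫ ψ := by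
  constructor
  · intro h φ
    obtain ⟨y, hy⟩ := Abelian.Ext.contravariant_sequence_exact₁ hS Y (Abelian.Ext.mk₀ φ)
      (n₁ := 1) (by lia) (Subsingleton.elim _ _)
    obtain ⟨ψ, rfl⟩ := (Abelian.Ext.mk₀_bijective _ _).surjective y
    rw [Abelian.Ext.mk₀_comp_mk₀] at hy
    exact ⟨ψ, (Abelian.Ext.mk₀_bijective _ _).injective hy⟩
  · refine fun h ↦ subsingleton_of_forall_eq 0 fun x ↦ ?_
    obtain ⟨y, rfl⟩ := Abelian.Ext.contravariant_sequence_exact₃ hS Y x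
      (Abelian.Ext.eq_zero_of_projective _) (n₀ := 0) (by lia)
    obtain ⟨φ, rfl⟩ := (Abelian.Ext.mk₀_bijective _ _).surjective y
    obtain ⟨ψ, rfl⟩ := h φ
    rw [← Abelian.Ext.mk₀_comp_mk₀, hS.extClass_comp_assoc]

lemma subsingleton_ext_X₃_of_ext_X₁ (hS : S.ShortExact) [Injective S.X₂] (X : C) (n : ℕ)
    (h : Subsingleton (Abelian.Ext.{w} X S.X₁ (n + 2))) :
    Subsingleton (Abelian.Ext.{w} X S.X₃ (n + 1)) := by
  refine subsingleton_of_forall_eq 0 fun x ↦ ?_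
  obtain ⟨y, rfl⟩ := Abelian.Ext.covariant_sequence_exact₃ X hS x (n₁ := n + 2) rfl
    (Subsingleton.elim _ _)
  rw [y.eq_zero_of_injective, Abelian.Ext.zero_comp]

end ExtShift

section ExtModule

lemma subsingleton_ext_X₃_one_iff_surjective_lcomp {A : Type u} [CommRing A]
    {S : ShortComplex (ModuleCat.{u} A)} (hS : S.ShortExact) [Projective S.X₂]
    (M : ModuleCat.{u} A) :
    Subsingleton (Abelian.Ext.{u} S.X₃ M 1) ↔
      Function.Surjective (LinearMap.lcomp A M S.f.hom) := by
  rw [subsingleton_ext_X₃_one_iff_surjective hS, ← EquivLike.comp_surjective _ ModuleCat.homEquiv,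
    ← EquivLike.surjective_comp (ModuleCat.homEquiv (M := S.X₂) (N := M))]
  rfl

lemma baer_of_subsingleton_ext_quotient {A : Type u} [Ring A] {M : ModuleCat.{u} A}
    (h : ∀ I : Ideal A, Subsingleton (Abelian.Ext.{u} (ModuleCat.of A (A ⧸ I)) M 1)) :
    Module.Baer A M := by
  intro I g
  have hS := I.mkQ.shortExact_shortComplexKer I.mkQ_surjective
  let g' : LinearMap.ker I.mkQ →ₗ[A] M := g ∘ₗ Submodule.inclusion I.ker_mkQ.le
  obtain ⟨ψ, hψ⟩ := (subsingleton_ext_X₃_one_iff_surjective hS M).1 (h I) (ModuleCat.ofHom g')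
  refine ⟨ψ.hom, fun x hx ↦ ?_⟩
  exact congr($(hψ).hom ⟨x, I.ker_mkQ.ge hx⟩)

lemma hasInjectiveDimensionLT_succ_of_subsingleton_ext_quotient {A : Type u} [Ring A]
    {M : ModuleCat.{u} A} {n : ℕ}
    (h : ∀ I : Ideal A, Subsingleton (Abelian.Ext.{u} (ModuleCat.of A (A ⧸ I)) M (n + 1))) :
    HasInjectiveDimensionLT M (n + 1) := by
  induction n generalizing M with
  | zero =>
    have : Module.Injective A M := (baer_of_subsingleton_ext_quotient h).injective
    exact injective_iff_hasInjectiveDimensionLT_one.1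
      (Module.injective_object_of_injective_module A M)
  | succ n ih =>
    let J := (EnoughInjectives.presentation M).some
    have : Injective J.shortComplex.X₂ := J.injective
    refine (J.shortExact_shortComplex.hasInjectiveDimensionLT_X₃_iff n this).1 (ih fun I ↦ ?_)
    exact subsingleton_ext_X₃_of_ext_X₁ J.shortExact_shortComplex _ _ (h I)

lemma subsingleton_extGroup_succ_iff {A : Type u} [CommRing A] (N M : ModuleCat.{u} A) (n : ℕ) :
    Subsingleton (extGroup A N M (n + 1)) ↔ Subsingleton (Abelian.Ext.{u} N M (n + 1)) := by
  let P := projectiveResolution N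
  have hcocycle : Subsingleton (extGroup A N M (n + 1)) ↔
      ∀ f : P.complex.X (n + 1) ⟶ M, P.complex.d (n + 2) (n + 1) ≫ f = 0 →
        ∃ g : P.complex.X n ⟶ M, P.complex.d (n + 1) n ≫ g = f := by
    rw [← ModuleCat.isZero_iff_subsingleton, (P.isoExt (R := A) (n + 1) M).isZero_iff,
      ← HomologicalComplex.exactAt_iff_isZero_homology,
      HomologicalComplex.exactAt_iff' _ n (n + 1) (n + 2) (by simp) (by simp),
      ShortComplex.moduleCat_exact_iff]
    rfl
  rw [hcocycle]
  constructor
  · refine fun h ↦ subsingleton_of_forall_eq 0 fun x ↦ ?_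
    obtain ⟨f, hf, rfl⟩ := P.extMk_surjective x (n + 2) rfl
    exact (P.extMk_eq_zero_iff f (n + 2) rfl hf n rfl).2 (h f hf)
  · exact fun h f hf ↦
      (P.extMk_eq_zero_iff f (n + 2) rfl hf n rfl).1 (Subsingleton.elim _ _)

end ExtModule

section LeftDerived

open Limits

variable {C D : Type*} [Category* C] [Category* D] [Abelian D]

lemma isZero_homology_X₃_iff_mono {ι : Type*} {c : ComplexShape ι}
    {T : ShortComplex (HomologicalComplex D c)} (hT : T.ShortExact) {i j : ι} (hij : c.Rel i j)
    (h : IsZero (T.X₂.homology i)) :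
    IsZero (T.X₃.homology i) ↔ Mono (HomologicalComplex.homologyMap T.f j) := by
  have hδ : Mono (hT.δ i j hij) := hT.mono_δ i j hij h
  refine ⟨fun h₃ ↦ (hT.homology_exact₁ i j hij).mono_g (h₃.eq_of_src _ _), fun hf ↦ ?_⟩
  exact IsZero.of_mono_eq_zero _ (zero_of_comp_mono _ (hT.δ_comp i j hij))

section Preadditive

variable [Preadditive C] (S : ShortComplex (C ⥤ D)) [S.X₁.Additive] [S.X₂.Additive]
  [S.X₃.Additive]

/-- The short complex of chain complexes `S.X₁(K) ⟶ S.X₂(K) ⟶ S.X₃(K)`. -/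
noncomputable def mapChainComplexShortComplex (K : ChainComplex C ℕ) :
    ShortComplex (ChainComplex D ℕ) where
  X₁ := (S.X₁.mapHomologicalComplex _).obj K
  X₂ := (S.X₂.mapHomologicalComplex _).obj K
  X₃ := (S.X₃.mapHomologicalComplex _).obj K
  f := (NatTrans.mapHomologicalComplex S.f _).app K
  g := (NatTrans.mapHomologicalComplex S.g _).app K
  zero := by
    ext i
    exact congr_app S.zero (K.X i)

variable {S} in
lemma shortExact_mapChainComplexShortComplex
    (hS : ∀ (P : C) [Projective P], (S.map ((evaluation C D).obj P)).ShortExact)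
    (K : ChainComplex C ℕ) [∀ i, Projective (K.X i)] :
    (mapChainComplexShortComplex S K).ShortExact :=
  HomologicalComplex.shortExact_of_degreewise_shortExact _ fun i ↦ hS (K.X i)

end Preadditive

variable [Abelian C] {S : ShortComplex (C ⥤ D)} [S.X₁.Additive] [S.X₂.Additive] [S.X₃.Additive]

lemma fromLeftDerivedZero'_naturality {F G : C ⥤ D} [F.Additive] [G.Additive] (α : F ⟶ G) {X : C}
    (P : ProjectiveResolution X) :
    HomologicalComplex.opcyclesMap ((NatTrans.mapHomologicalComplex α _).app P.complex) 0 ≫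
      P.fromLeftDerivedZero' G = P.fromLeftDerivedZero' F ≫ α.app X := by
  rw [← cancel_epi (HomologicalComplex.pOpcycles _ _), HomologicalComplex.p_opcyclesMap_assoc,
    ProjectiveResolution.pOpcycles_comp_fromLeftDerivedZero',
    ProjectiveResolution.pOpcycles_comp_fromLeftDerivedZero'_assoc]
  exact (α.naturality (P.π.f 0)).symm

lemma mono_homologyMap_zero_iff_mono_app {F G : C ⥤ D} [F.Additive] [G.Additive]
    [PreservesFiniteColimits F] [PreservesFiniteColimits G] (α : F ⟶ G) {X : C}
    (P : ProjectiveResolution X) :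
    Mono (HomologicalComplex.homologyMap
      ((NatTrans.mapHomologicalComplex α (.down ℕ)).app P.complex) 0) ↔ Mono (α.app X) := by
  let e (F : C ⥤ D) [F.Additive] [PreservesFiniteColimits F] :
      ((F.mapHomologicalComplex (.down ℕ)).obj P.complex).homology 0 ≅ F.obj X :=
    ChainComplex.isoHomologyι₀ _ ≪≫ asIso (P.fromLeftDerivedZero' F)
  exact (MorphismProperty.monomorphisms D).arrow_mk_iso_iff (Arrow.isoMk (e F) (e G) (by
    simp [e, fromLeftDerivedZero'_naturality α P]))

variable [HasProjectiveResolutions C]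

lemma isZero_leftDerived_iff_homology (F : C ⥤ D) [F.Additive] {X : C} (P : ProjectiveResolution X)
    (n : ℕ) : IsZero ((F.leftDerived n).obj X) ↔
      IsZero (((F.mapHomologicalComplex _).obj P.complex).homology n) :=
  (P.isoLeftDerivedObj F n).isZero_iff

lemma isZero_leftDerived_X₃_iff_X₁
    (hS : ∀ (P : C) [Projective P], (S.map ((evaluation C D).obj P)).ShortExact) {X : C}
    (n : ℕ) (h₁ : IsZero ((S.X₂.leftDerived (n + 1)).obj X))
    (h₂ : IsZero ((S.X₂.leftDerived (n + 2)).obj X)) :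
    IsZero ((S.X₃.leftDerived (n + 2)).obj X) ↔
      IsZero ((S.X₁.leftDerived (n + 1)).obj X) := by
  let P := projectiveResolution X
  simp only [isZero_leftDerived_iff_homology _ P] at h₁ h₂ ⊢
  exact ((shortExact_mapChainComplexShortComplex hS P.complex).δIso (n + 2) (n + 1) (by simp)
    h₂ h₁).isZero_iff

lemma isZero_leftDerived_one_X₃_iff_mono [PreservesFiniteColimits S.X₁]
    [PreservesFiniteColimits S.X₂]
    (hS : ∀ (P : C) [Projective P], (S.map ((evaluation C D).obj P)).ShortExact) {X : C}
    (hX : IsZero ((S.X₂.leftDerived 1).obj X)) :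
    IsZero ((S.X₃.leftDerived 1).obj X) ↔ Mono (S.f.app X) := by
  let P := projectiveResolution X
  rw [isZero_leftDerived_iff_homology _ P] at hX ⊢
  exact (isZero_homology_X₃_iff_mono (shortExact_mapChainComplexShortComplex hS P.complex)
    (by simp) hX).trans (mono_homologyMap_zero_iff_mono_app S.f P)

end LeftDerived

section Tor

open Limits MonoidalCategory

variable {A : Type u} [CommRing A]

/-- The short complex of functors `S.X₁ ⊗ - ⟶ S.X₂ ⊗ - ⟶ S.X₃ ⊗ -`. -/
noncomputable abbrev tensorShortComplex (S : ShortComplex (ModuleCat.{u} A)) :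
    ShortComplex (ModuleCat.{u} A ⥤ ModuleCat.{u} A) where
  f := (tensoringLeft _).map S.f
  g := (tensoringLeft _).map S.g
  zero := (S.map (curriedTensor _)).zero

lemma flat_of_projective (P : ModuleCat.{u} A) [Projective P] : Module.Flat A P :=
  have := (IsProjective.iff_projective P).2 ‹_›
  inferInstance

lemma shortExact_tensorShortComplex {S : ShortComplex (ModuleCat.{u} A)} (hS : S.ShortExact)
    (P : ModuleCat.{u} A) [Projective P] :
    ((tensorShortComplex S).map ((evaluation _ _).obj P)).ShortExact := by
  have := flat_of_projective P
  have := hS.mono_f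
  have := hS.epi_g
  exact hS.map (tensorRight P)

lemma subsingleton_torGroup_succ_iff_exact (N : ModuleCat.{u} A) {X : ModuleCat.{u} A}
    (P : ProjectiveResolution X) (n : ℕ) :
    Subsingleton (torGroup A N X (n + 1)) ↔
      Function.Exact ((P.complex.d (n + 2) (n + 1)).hom.lTensor N)
        ((P.complex.d (n + 1) n).hom.lTensor N) := by
  rw [← ModuleCat.isZero_iff_subsingleton]
  refine (isZero_leftDerived_iff_homology _ P (n + 1)).trans ?_
  rw [← HomologicalComplex.exactAt_iff_isZero_homology,
    HomologicalComplex.exactAt_iff' _ (n + 2) (n + 1) n (by simp) (by simp),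
    ShortComplex.ShortExact.moduleCat_exact_iff_function_exact]
  rfl

lemma isZero_torGroup_succ_of_flat (N X : ModuleCat.{u} A) [Module.Flat A N] (n : ℕ) :
    IsZero (torGroup A N X (n + 1)) := by
  let P := projectiveResolution X
  rw [ModuleCat.isZero_iff_subsingleton, subsingleton_torGroup_succ_iff_exact N P]
  have hP := P.complex_exactAt_succ n
  rw [HomologicalComplex.exactAt_iff' _ (n + 2) (n + 1) n (by simp) (by simp),
    ShortComplex.ShortExact.moduleCat_exact_iff_function_exact] at hP
  exact Module.Flat.lTensor_exact N hP

lemma subsingleton_torGroup_succ_of_finite {X : ModuleCat.{u} A} {n : ℕ}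
    (h : ∀ N : ModuleCat.{u} A, Module.Finite A N → Subsingleton (torGroup A N X (n + 1)))
    (N : ModuleCat.{u} A) : Subsingleton (torGroup A N X (n + 1)) := by
  let P := projectiveResolution X
  have := flat_of_projective (P.complex.X n)
  let d := (P.complex.d (n + 1) n).hom
  let d' := (P.complex.d (n + 2) (n + 1)).hom
  have hdd' : d ∘ₗ d' = 0 := ModuleCat.hom_ext_iff.1 (P.complex.d_comp_d _ _ _)
  refine (subsingleton_torGroup_succ_iff_exact N P n).2 fun t ↦ ⟨fun ht ↦ ?_, ?_⟩
  · obtain ⟨N', hN', ht'⟩ :=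
      TensorProduct.exists_finite_submodule_left_of_setFinite {t} (Set.finite_singleton t)
    obtain ⟨t, rfl⟩ := ht' rfl
    have hcomm {V W : Type u} [AddCommGroup V] [Module A V] [AddCommGroup W] [Module A W]
        (f : V →ₗ[A] W) (x : N' ⊗[A] V) :
        f.lTensor N (N'.subtype.rTensor V x) = N'.subtype.rTensor W (f.lTensor N' x) := by
      simp only [← LinearMap.comp_apply, LinearMap.lTensor_comp_rTensor,
        LinearMap.rTensor_comp_lTensor]
    have hexact := (subsingleton_torGroup_succ_iff_exact (.of A N') P n).1 (h (.of A N') hN')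
    have ht : d.lTensor N' t = 0 := by
      refine Module.Flat.rTensor_preserves_injective_linearMap _ N'.injective_subtype ?_
      rw [map_zero, ← hcomm, ht]
    obtain ⟨s, rfl⟩ := (hexact t).1 ht
    exact ⟨N'.subtype.rTensor _ s, hcomm _ s⟩
  · rintro ⟨s, rfl⟩
    change d.lTensor N (d'.lTensor N s) = 0
    rw [← LinearMap.lTensor_comp_apply, hdd', LinearMap.lTensor_zero, LinearMap.zero_apply]

variable {S : ShortComplex (ModuleCat.{u} A)} (hS : S.ShortExact) [Module.Flat A S.X₂]
include hS

lemma subsingleton_torGroup_X₃_iff_torGroup_X₁ (X : ModuleCat.{u} A) (n : ℕ) :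
    Subsingleton (torGroup A S.X₃ X (n + 2)) ↔ Subsingleton (torGroup A S.X₁ X (n + 1)) := by
  simp only [← ModuleCat.isZero_iff_subsingleton]
  exact isZero_leftDerived_X₃_iff_X₁ (S := tensorShortComplex S)
    (fun P _ ↦ shortExact_tensorShortComplex hS P) n (isZero_torGroup_succ_of_flat S.X₂ X n)
    (isZero_torGroup_succ_of_flat S.X₂ X (n + 1))

lemma subsingleton_torGroup_X₃_one_iff_injective (X : ModuleCat.{u} A) :
    Subsingleton (torGroup A S.X₃ X 1) ↔ Function.Injective (S.f.hom.rTensor X) := by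
  rw [← ModuleCat.isZero_iff_subsingleton, ← ModuleCat.hom_whiskerRight,
    ← ModuleCat.mono_iff_injective]
  exact isZero_leftDerived_one_X₃_iff_mono (S := tensorShortComplex S)
    (fun P _ ↦ shortExact_tensorShortComplex hS P) (isZero_torGroup_succ_of_flat S.X₂ X 0)

end Tor

section Dimension

variable {A : Type u} [CommRing A]

lemma IsFaithfullyInjective.subsingleton_torGroup_hom_iff_ext [IsNoetherianRing A] {E : Type u}
    [AddCommGroup E] [Module A E] (hE : IsFaithfullyInjective A E) (M : Type u) [AddCommGroup M]
    [Module A M] (N : Type u) [AddCommGroup N] [Module A N] [Module.Finite A N] (n : ℕ) :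
    Subsingleton (torGroup A (.of A N) (.of A (M →ₗ[A] E)) (n + 1)) ↔
      Subsingleton (Abelian.Ext.{u} (ModuleCat.of A N) (ModuleCat.of A M) (n + 1)) := by
  induction n generalizing N with
  | zero =>
    obtain ⟨F, _, _, _, _, p, hp⟩ := Module.exists_finite_presentation A N
    have hS := p.shortExact_shortComplexKer hp
    have := Module.finitePresentation_of_finite A F
    have := Module.finitePresentation_of_finite A (LinearMap.ker p)
    exact (subsingleton_torGroup_X₃_one_iff_injective hS _).trans
      ((hE.rTensor_hom_injective_iff M (LinearMap.ker p).subtype).trans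
        (subsingleton_ext_X₃_one_iff_surjective_lcomp hS (.of A M)).symm)
  | succ n ih =>
    obtain ⟨F, _, _, _, _, p, hp⟩ := Module.exists_finite_presentation A N
    have hS := p.shortExact_shortComplexKer hp
    exact (subsingleton_torGroup_X₃_iff_torGroup_X₁ hS _ n).trans
      ((ih (LinearMap.ker p)).trans (subsingleton_ext_X₃_iff_ext_X₁ hS _ n).symm)

lemma flatDim_eq_injDim_of_subsingleton_iff {X M : ModuleCat.{u} A}
    (h : ∀ n, (∀ N, Subsingleton (torGroup A N X (n + 1))) ↔
      ∀ N, Subsingleton (extGroup A N M (n + 1))) : flatDim A X = injDim A M := by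
  have hpos (d : ℕ∞) (P : ModuleCat.{u} A → ℕ → Prop) :
      (∀ N (i : ℕ), d < i → P N i) ↔ ∀ n : ℕ, d < ↑(n + 1) → ∀ N, P N (n + 1) := by
    refine ⟨fun h n hn N ↦ h N _ hn, fun h N i hi ↦ ?_⟩
    have hi₀ : i ≠ 0 := Nat.cast_ne_zero.1 (bot_le.trans_lt hi).ne'
    obtain ⟨n, rfl⟩ := Nat.exists_eq_add_one_of_ne_zero hi₀
    exact h n hi N
  simp only [flatDim, injDim, hpos _ fun N i ↦ Subsingleton (torGroup A N X i),
    hpos _ fun N i ↦ Subsingleton (extGroup A N M i), h]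

end Dimension

theorem flatDim_hom_faithfullyInjective_eq_injDim
    (A : Type u) [CommRing A] [IsNoetherianRing A]
    (E : Type u) [AddCommGroup E] [Module A E]
    (hinj : Module.Injective A E)
    (hfaith : ∀ (M : Type u) [AddCommGroup M] [Module A M],
      Subsingleton (M →ₗ[A] E) → Subsingleton M)
    (M : Type u) [AddCommGroup M] [Module A M] :
    flatDim A (ModuleCat.of A (M →ₗ[A] E)) = injDim A (ModuleCat.of A M) := by
  have hE : IsFaithfullyInjective A E := ⟨hinj, hfaith⟩
  refine flatDim_eq_injDim_of_subsingleton_iff fun n ↦ ⟨fun h N ↦ ?_, fun h ↦ ?_⟩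
  · have : HasInjectiveDimensionLT (ModuleCat.of A M) (n + 1) :=
      hasInjectiveDimensionLT_succ_of_subsingleton_ext_quotient fun I ↦
        (hE.subsingleton_torGroup_hom_iff_ext M (A ⧸ I) n).1 (h _)
    exact (subsingleton_extGroup_succ_iff N _ n).2
      (HasInjectiveDimensionLT.subsingleton _ (n + 1) (n + 1) le_rfl N)
  · exact subsingleton_torGroup_succ_of_finite fun N _ ↦
      (hE.subsingleton_torGroup_hom_iff_ext M N n).2
        ((subsingleton_extGroup_succ_iff _ _ n).1 (h N))
end

section
/- Let (A, m) be a commutative noetherian local ring with residue field k. Then the small finitistic projective dimension of A equals the depth of A; that is, sup{ projdim_A(M) : M a nonzero finitely generated A-module with projdim_A(M) < ∞ } = depth(A). -/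
/-!
STATEMENT 12: Let (A, m) be a commutative noetherian local ring with residue field k.
Then the small finitistic projective dimension of A equals the depth of A:
sup{ projdim_A(M) : M nonzero finitely generated with projdim_A(M) < ∞ } = depth(A).
-/

open CategoryTheory

universe u

/-- The depth of a commutative local ring `A`: the least `i : ℕ` such that
`Ext_A^i(k, A) ≠ 0`, where `k` is the residue field of `A` (`∞` if no such `i` exists). -/
noncomputable def ringDepth (A : Type u) [CommRing A] [IsLocalRing A] : ℕ∞ :=
  sInf {n : ℕ∞ | ∃ i : ℕ, (i : ℕ∞) = n ∧
    ¬ Subsingleton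
      (extGroup A (ModuleCat.of A (IsLocalRing.ResidueField A)) (ModuleCat.of A A) i)}

/-!
By Rees, if `n ≤ depth A` then the maximal ideal contains a regular sequence `x₁, …, xₙ`, and
`A ⧸ (x₁, …, xₙ)` has projective dimension `n`.

Conversely, let `t = depth A` and let `M` have projective dimension `n`. The maximal ideal kills
`Ext(k, A)`, so a map `K → F` of finite free modules acts on `Ext^t(k, -) = Ext^t(k, A) ⊗ₖ (k ⊗ -)`
through its reduction modulo `m`. Hence, if `n = 1`, the inclusion of the first syzygy of `M` in a
finite free module, which does not split, kills a nonzero class of `Ext^t(k, -)`, and the long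
exact sequence lifts that class to `Ext^(t-1)(k, M) ≠ 0`. As `Ext^i(k, A) = 0` for `i < t`, each
further syzygy sequence lowers the degree by one, so that `Ext^(t-n)(k, M) ≠ 0` and `n ≤ t`.
-/

open Abelian.Ext (mk₀)

section ClassicalExt

variable {R C : Type*} [Ring R] [Category* C] [Abelian C] [Linear R C] {X Y : C}

theorem exactAt_linearYonedaObj_zero_iff (P : ProjectiveResolution X) :
    (P.complex.linearYonedaObj R Y).ExactAt 0 ↔ Subsingleton (X ⟶ Y) := by
  rw [HomologicalComplex.exactAt_iff' _ 0 0 1 (by simp) (by simp),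
    ShortComplex.moduleCat_exact_iff]
  let π : P.complex.X 0 ⟶ X := P.π.f 0
  have epi : Epi π := inferInstanceAs (Epi (P.π.f 0))
  have d_comp_π : P.complex.d 1 0 ≫ π = 0 := P.complex_d_comp_π_f_zero
  constructor
  · intro exact
    refine subsingleton_of_forall_eq 0 fun f ↦ (cancel_epi π).1 ?_
    have cocycle : P.complex.d 1 0 ≫ π ≫ f = 0 := by
      rw [← Category.assoc, d_comp_π, Limits.zero_comp]
    obtain ⟨g : P.complex.X 0 ⟶ Y, hg : P.complex.d 0 0 ≫ g = π ≫ f⟩ := exact (π ≫ f) cocycle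
    rw [← hg, P.complex.shape 0 0 (by simp), Limits.zero_comp, Limits.comp_zero]
  · intro subsingleton (f : P.complex.X 0 ⟶ Y) (hf : P.complex.d 1 0 ≫ f = 0)
    let f' : X ⟶ Y := P.exact₀.desc f hf
    have factor : π ≫ f' = f := P.exact₀.g_desc f hf
    rw [subsingleton.elim f' 0, Limits.comp_zero] at factor
    exact ⟨0, (map_zero _).trans factor⟩

theorem exactAt_linearYonedaObj_succ_iff [HasExt C] (P : ProjectiveResolution X) (n : ℕ) :
    (P.complex.linearYonedaObj R Y).ExactAt (n + 1) ↔
      Subsingleton (Abelian.Ext X Y (n + 1)) := by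
  rw [HomologicalComplex.exactAt_iff' _ n (n + 1) (n + 2) (by simp) (by simp),
    ShortComplex.moduleCat_exact_iff]
  constructor
  · intro exact
    refine subsingleton_of_forall_eq 0 fun e ↦ ?_
    obtain ⟨f, hf, rfl⟩ := P.extMk_surjective e (n + 2) rfl
    exact (P.extMk_eq_zero_iff f _ _ hf n rfl).2 (exact f hf)
  · intro subsingleton f hf
    exact (P.extMk_eq_zero_iff f (n + 2) rfl hf n rfl).1 (subsingleton.elim _ _)

/-- Compares `Ext` as a derived functor with `Ext` in the derived category. -/
theorem subsingleton_ext_obj_iff [EnoughProjectives C] [HasExt C] (n : ℕ) :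
    Subsingleton (((Ext R C n).obj (.op X)).obj Y) ↔ Subsingleton (Abelian.Ext X Y n) := by
  let P := projectiveResolution X
  rw [((P.isoExt (R := R) n Y).toLinearEquiv).toEquiv.subsingleton_congr,
    ← ModuleCat.isZero_iff_subsingleton, ← HomologicalComplex.exactAt_iff_isZero_homology]
  cases n with
  | zero => rw [exactAt_linearYonedaObj_zero_iff, Abelian.Ext.homEquiv₀.subsingleton_congr]
  | succ n => exact exactAt_linearYonedaObj_succ_iff P n

end ClassicalExt

section AbelianCategory

variable {C : Type*} [Category* C] [Abelian C]

section YonedaExt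

variable [HasExt C] {X Y Z : C} {n : ℕ}

theorem comp_mk₀_injective_of_isSplitMono (f : Y ⟶ Z) [IsSplitMono f] :
    Function.Injective fun e : Abelian.Ext X Y n ↦ e.comp (mk₀ f) (add_zero n) :=
  Function.LeftInverse.injective (g := fun e ↦ e.comp (mk₀ (retraction f)) (add_zero n))
    fun e ↦ by simp

theorem nontrivial_ext_X₃_of_comp_mk₀_eq_zero {S : ShortComplex C} (hS : S.ShortExact)
    {e : Abelian.Ext X S.X₁ n} (e_ne_zero : e ≠ 0) (he : e.comp (mk₀ S.f) (add_zero n) = 0) :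
    ∃ m, m + 1 = n ∧ Nontrivial (Abelian.Ext X S.X₃ m) := by
  cases n with
  | zero =>
    have := hS.mono_f
    refine absurd (Abelian.Ext.postcomp_mk₀_injective_of_mono X S.f ?_) e_ne_zero
    simpa using he
  | succ m =>
    obtain ⟨e', he'⟩ := Abelian.Ext.covariant_sequence_exact₁ X hS e he rfl
    refine ⟨m, rfl, nontrivial_of_ne e' 0 ?_⟩
    rintro rfl
    exact e_ne_zero (he'.symm.trans (Abelian.Ext.zero_comp ..))

end YonedaExt

theorem projectiveDimension_eq_natCast_iff {X : C} {n : ℕ} :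
    projectiveDimension X = n ↔
      HasProjectiveDimensionLE X n ∧ ¬ HasProjectiveDimensionLT X n := by
  rw [← projectiveDimension_ge_iff, ← projectiveDimension_le_iff, le_antisymm_iff]

theorem projectiveDimension_X₁_of_projectiveDimension_X₃ {S : ShortComplex C} (hS : S.ShortExact)
    (projective : Projective S.X₂) {n : ℕ} (hn : projectiveDimension S.X₃ = (n + 2 : ℕ)) :
    projectiveDimension S.X₁ = (n + 1 : ℕ) := by
  rw [projectiveDimension_eq_natCast_iff] at hn ⊢
  exact ⟨(hS.hasProjectiveDimensionLT_X₃_iff (n + 1) projective).1 hn.1,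
    mt (hS.hasProjectiveDimensionLT_X₃_iff n projective).2 hn.2⟩

theorem projective_X₃_of_isSplitMono {S : ShortComplex C} (hS : S.ShortExact)
    [Projective S.X₂] [IsSplitMono S.f] : Projective S.X₃ :=
  let σ := ShortComplex.Splitting.ofExactOfRetraction S hS.exact (retraction S.f)
    (IsSplitMono.id S.f) hS.epi_g
  (Retract.mk σ.s S.g σ.s_g).projective

end AbelianCategory

theorem nontrivial_iff_not_hasProjectiveDimensionLT_zero {R : Type*} [Ring R] {M : ModuleCat R} :
    Nontrivial M ↔ ¬ HasProjectiveDimensionLT M 0 := by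
  rw [hasProjectiveDimensionLT_zero_iff_isZero, ModuleCat.isZero_iff_subsingleton,
    not_subsingleton_iff_nontrivial]

theorem free_of_hasProjectiveDimensionLE_zero {A : Type u} [CommRing A] [IsLocalRing A]
    (M : ModuleCat.{u} A) [Module.Finite A M] (hM : HasProjectiveDimensionLE M 0) :
    Module.Free A M := by
  have := (IsProjective.iff_projective M).2 (projective_iff_hasProjectiveDimensionLT_one.2 hM)
  exact Module.free_of_flat_of_isLocalRing

section ExtOfModules

variable {A : Type u} [CommRing A] {X : ModuleCat.{u} A} {n : ℕ}

theorem smul_ext_eq_zero_of_mem_annihilator {Y : ModuleCat.{u} A} {r : A}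
    (hr : r ∈ Module.annihilator A X) (e : Abelian.Ext X Y n) : r • e = 0 := by
  have smul_id : r • 𝟙 X = 0 := by
    ext x
    exact Module.mem_annihilator.1 hr x
  rw [← Abelian.Ext.mk₀_id_comp e, ← Abelian.Ext.smul_comp, ← Abelian.Ext.mk₀_smul, smul_id,
    Abelian.Ext.mk₀_zero, Abelian.Ext.zero_comp]

theorem ext_comp_mk₀_toSpanSingleton_eq_zero {I : Ideal A} (hI : I ≤ Module.annihilator A X)
    {F : ModuleCat.{u} A} {v : F} (hv : v ∈ I • (⊤ : Submodule A F))
    (e : Abelian.Ext X (ModuleCat.of A A) n) :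
    e.comp (mk₀ (ModuleCat.ofHom (LinearMap.toSpanSingleton A F v))) (add_zero n) = 0 := by
  induction hv using Submodule.smul_induction_on' with
  | smul r hr w _ =>
    have smul_ofHom : ModuleCat.ofHom (LinearMap.toSpanSingleton A F (r • w)) =
        r • ModuleCat.ofHom (LinearMap.toSpanSingleton A F w) := by
      rw [LinearMap.toSpanSingleton_smul]
      rfl
    rw [smul_ofHom, Abelian.Ext.mk₀_smul, Abelian.Ext.comp_smul,
      smul_ext_eq_zero_of_mem_annihilator (hI hr)]
  | add v _ w _ hv hw =>
    rw [LinearMap.toSpanSingleton_add, ModuleCat.ofHom_add, Abelian.Ext.mk₀_add,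
      Abelian.Ext.comp_add, hv, hw, add_zero]

theorem subsingleton_ext_of_finite_free (F : Type u) [AddCommGroup F] [Module A F]
    [Module.Finite A F] [Module.Free A F] [Subsingleton (Abelian.Ext X (ModuleCat.of A A) n)] :
    Subsingleton (Abelian.Ext X (ModuleCat.of A F) n) := by
  let ι := Fin (Fintype.card (Module.Free.ChooseBasisIndex A F))
  let b : Module.Basis ι A F := (Module.Free.chooseBasis A F).reindex (Fintype.equivFin _)
  let A' (_ : ι) : ModuleCat A := ModuleCat.of A A
  let iso : ModuleCat.of A F ≅ ⨁ A' := b.equivFun.toModuleIso ≪≫ (ModuleCat.biproductIsoPi A').symm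
  have : Subsingleton (Abelian.Ext X (⨁ A') n) :=
    (Abelian.Ext.addEquivBiproduct X (Limits.biproduct.isBilimit A') n).subsingleton
  exact (comp_mk₀_injective_of_isSplitMono iso.hom).subsingleton

theorem nontrivial_ext_of_free (F : Type u) [AddCommGroup F] [Module A F] [Nontrivial F]
    [Module.Free A F] [Nontrivial (Abelian.Ext X (ModuleCat.of A A) n)] :
    Nontrivial (Abelian.Ext X (ModuleCat.of A F) n) := by
  have := Module.nontrivial A F
  let b := Module.Free.chooseBasis A F
  obtain ⟨i⟩ := b.index_nonempty
  let ι := ModuleCat.ofHom (LinearMap.toSpanSingleton A F (b i))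
  have : IsSplitMono ι := ⟨⟨ModuleCat.ofHom (b.coord i), by ext; simp [ι]⟩⟩
  exact (comp_mk₀_injective_of_isSplitMono ι).nontrivial

end ExtOfModules

section ResidueField

open TensorProduct

variable {A : Type*} [CommRing A]

theorem one_tmul_quotient_eq_zero_iff {M : Type*} [AddCommGroup M] [Module A M] {I : Ideal A}
    {x : M} : (1 : A ⧸ I) ⊗ₜ[A] x = 0 ↔ x ∈ I • (⊤ : Submodule A M) := by
  rw [← map_eq_zero_iff _ (TensorProduct.quotTensorEquivQuotSMul M I).injective,
    TensorProduct.quotTensorEquivQuotSMul_mk_one_tmul,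
    Submodule.Quotient.mk_eq_zero]

variable [IsLocalRing A]

theorem annihilator_residueField :
    Module.annihilator A (IsLocalRing.ResidueField A) = IsLocalRing.maximalIdeal A :=
  Ideal.annihilator_quotient

variable {K : Type*} [AddCommGroup K] [Module A K]

theorem exists_dual_apply_eq_one [Module.Free A K] {x : K}
    (hx : x ∉ IsLocalRing.maximalIdeal A • (⊤ : Submodule A K)) :
    ∃ φ : Module.Dual A K, φ x = 1 := by
  let b := Module.Free.chooseBasis A K
  obtain ⟨i, hi⟩ : ∃ i, IsUnit (b.repr x i) := by
    contrapose! hx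
    rw [← b.linearCombination_repr x, Finsupp.linearCombination_apply]
    exact sum_mem fun i _ ↦ Submodule.smul_mem_smul (hx i) trivial
  obtain ⟨u, hu⟩ := hi
  exact ⟨(↑u⁻¹ : A) • b.coord i, by simp [← hu]⟩

theorem exists_notMem_map_mem_maximalIdeal_smul {F : Type*} [AddCommGroup F] [Module A F]
    [Module.Finite A K] [Module.Finite A F] [Module.Free A F] {l : K →ₗ[A] F}
    (hl : ¬ ∃ l', l' ∘ₗ l = LinearMap.id) :
    ∃ x ∉ IsLocalRing.maximalIdeal A • (⊤ : Submodule A K),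
      l x ∈ IsLocalRing.maximalIdeal A • (⊤ : Submodule A F) := by
  rw [IsLocalRing.split_injective_iff_lTensor_residueField_injective,
    injective_iff_map_eq_zero] at hl
  push Not at hl
  obtain ⟨z, hz, z_ne_zero⟩ := hl
  obtain ⟨x, rfl⟩ : ∃ x : K, (1 : IsLocalRing.ResidueField A) ⊗ₜ[A] x = z :=
    TensorProduct.mk_surjective A K _ IsLocalRing.residue_surjective z
  exact ⟨x, mt one_tmul_quotient_eq_zero_iff.2 z_ne_zero, one_tmul_quotient_eq_zero_iff.1 hz⟩

end ResidueField

section AuslanderBuchsbaum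

open IsLocalRing

variable {A : Type u} [CommRing A] [IsLocalRing A] {X : ModuleCat.{u} A} {t : ℕ}

theorem exists_ext_ne_zero_comp_mk₀_eq_zero (hX : maximalIdeal A ≤ Module.annihilator A X)
    [Nontrivial (Abelian.Ext X (ModuleCat.of A A) t)] {K F : ModuleCat.{u} A}
    [Module.Finite A K] [Module.Free A K] [Module.Finite A F] [Module.Free A F]
    (f : K ⟶ F) (hf : ¬ IsSplitMono f) :
    ∃ e : Abelian.Ext X K t, e ≠ 0 ∧ e.comp (mk₀ f) (add_zero t) = 0 := by
  obtain ⟨x, hx, hfx⟩ := exists_notMem_map_mem_maximalIdeal_smul (l := f.hom)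
    fun ⟨l, hl⟩ ↦ hf ⟨⟨ModuleCat.ofHom l, ModuleCat.hom_ext hl⟩⟩
  obtain ⟨φ, hφ⟩ := exists_dual_apply_eq_one hx
  let ι := ModuleCat.ofHom (LinearMap.toSpanSingleton A K x)
  have : IsSplitMono ι := ⟨⟨ModuleCat.ofHom φ, by ext; simp [ι, hφ]⟩⟩
  have ι_comp_f : ι ≫ f = ModuleCat.ofHom (LinearMap.toSpanSingleton A F (f.hom x)) := by
    ext
    simp [ι]
  obtain ⟨e, e_ne_zero⟩ := exists_ne (0 : Abelian.Ext X (ModuleCat.of A A) t)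
  refine ⟨e.comp (mk₀ ι) (add_zero t), fun h ↦ e_ne_zero ?_, ?_⟩
  · exact comp_mk₀_injective_of_isSplitMono ι (h.trans (Abelian.Ext.zero_comp ..).symm)
  · rw [Abelian.Ext.comp_assoc_of_third_deg_zero, Abelian.Ext.mk₀_comp_mk₀, ι_comp_f]
    exact ext_comp_mk₀_toSpanSingleton_eq_zero hX hfx e

theorem exists_nontrivial_ext_of_projectiveDimension_eq [IsNoetherianRing A]
    (hX : maximalIdeal A ≤ Module.annihilator A X)
    (subsingleton_ext : ∀ i < t, Subsingleton (Abelian.Ext X (ModuleCat.of A A) i))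
    [Nontrivial (Abelian.Ext X (ModuleCat.of A A) t)] (M : ModuleCat.{u} A) [Module.Finite A M]
    {n : ℕ} (hn : projectiveDimension M = n) :
    ∃ s, s + n = t ∧ Nontrivial (Abelian.Ext X M s) := by
  induction n generalizing M with
  | zero =>
    obtain ⟨le_zero, nonzero⟩ := projectiveDimension_eq_natCast_iff.1 hn
    have := free_of_hasProjectiveDimensionLE_zero M le_zero
    have := nontrivial_iff_not_hasProjectiveDimensionLT_zero.2 nonzero
    exact ⟨t, rfl, nontrivial_ext_of_free M⟩
  | succ n ih =>
    obtain ⟨F, _, _, _, _, f, hf⟩ := Module.exists_finite_presentation A M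
    let S : ShortComplex (ModuleCat.{u} A) := f.shortComplexKer
    have hS : S.ShortExact := LinearMap.shortExact_shortComplexKer hf
    have : Module.Finite A S.X₁ := inferInstanceAs (Module.Finite A f.ker)
    have : Projective S.X₂ := inferInstanceAs (Projective (ModuleCat.of A F))
    suffices ∃ s, s + n = t ∧
        ∃ e : Abelian.Ext X S.X₁ s, e ≠ 0 ∧ e.comp (mk₀ S.f) (add_zero s) = 0 by
      obtain ⟨s, hs, e, e_ne_zero, he⟩ := this
      obtain ⟨m, rfl, hm⟩ := nontrivial_ext_X₃_of_comp_mk₀_eq_zero hS e_ne_zero he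
      exact ⟨m, by omega, hm⟩
    cases n with
    | zero =>
      obtain ⟨le_one, not_projective⟩ := projectiveDimension_eq_natCast_iff.1 hn
      have := free_of_hasProjectiveDimensionLE_zero S.X₁
        ((hS.hasProjectiveDimensionLT_X₃_iff 0 inferInstance).1 le_one)
      exact ⟨t, rfl, exists_ext_ne_zero_comp_mk₀_eq_zero hX S.f fun _ ↦ not_projective <|
        projective_iff_hasProjectiveDimensionLT_one.1 (projective_X₃_of_isSplitMono hS)⟩
    | succ n =>
      obtain ⟨s, hs, _⟩ :=
        ih S.X₁ (projectiveDimension_X₁_of_projectiveDimension_X₃ hS inferInstance hn)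
      obtain ⟨e, e_ne_zero⟩ := exists_ne (0 : Abelian.Ext X S.X₁ s)
      have := subsingleton_ext s (by omega)
      have : Subsingleton (Abelian.Ext X S.X₂ s) := subsingleton_ext_of_finite_free F
      exact ⟨s, hs, e, e_ne_zero, Subsingleton.elim _ _⟩

end AuslanderBuchsbaum

section ProjDim

variable {A : Type u} [CommRing A] {M : ModuleCat.{u} A} {n : ℕ}

theorem projDim_le_natCast_iff : projDim A M ≤ n ↔ HasProjectiveDimensionLE M n := by
  simp only [projDim, subsingleton_ext_obj_iff]
  constructor
  · intro h
    refine HasProjectiveDimensionLT.mk fun i hi N e ↦ ?_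
    have vanishing := csInf_mem (s := {n : ℕ∞ | ∀ (N : ModuleCat.{u} A) (i : ℕ), n < (i : ℕ∞) →
      Subsingleton (Abelian.Ext M N i)}) ⟨⊤, by simp⟩
    exact (vanishing N i (h.trans_lt (by exact_mod_cast hi))).elim _ _
  · intro h
    exact sInf_le fun N i hi ↦
      HasProjectiveDimensionLT.subsingleton M (n + 1) i (by exact_mod_cast hi) N

theorem projDim_eq_natCast_iff [Nontrivial M] : projDim A M = n ↔ projectiveDimension M = n := by
  rw [projectiveDimension_eq_natCast_iff, le_antisymm_iff, projDim_le_natCast_iff]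
  refine and_congr_right fun _ ↦ ?_
  cases n with
  | zero => simpa using nontrivial_iff_not_hasProjectiveDimensionLT_zero.1 ‹Nontrivial M›
  | succ m =>
    rw [← HasProjectiveDimensionLE, ← projDim_le_natCast_iff, not_le, Nat.cast_succ,
      ENat.add_one_le_iff (ENat.natCast_ne_top m)]

end ProjDim

section RingDepth

variable {A : Type u} [CommRing A] [IsLocalRing A] {n : ℕ}

theorem natCast_le_ringDepth_iff : n ≤ ringDepth A ↔ ∀ i < n, Subsingleton
    (Abelian.Ext (ModuleCat.of A (IsLocalRing.ResidueField A)) (ModuleCat.of A A) i) := by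
  simp only [ringDepth, subsingleton_ext_obj_iff, le_sInf_iff]
  constructor
  · intro h i hi
    by_contra nontrivial
    exact hi.not_ge (by exact_mod_cast h i ⟨i, rfl, nontrivial⟩)
  · rintro h _ ⟨i, rfl, nontrivial⟩
    by_contra! hi
    exact nontrivial (h i (by exact_mod_cast hi))

theorem nontrivial_ext_of_ringDepth_eq (hn : ringDepth A = n) : Nontrivial
    (Abelian.Ext (ModuleCat.of A (IsLocalRing.ResidueField A)) (ModuleCat.of A A) n) := by
  by_contra! subsingleton
  have succ_le : (n + 1 : ℕ) ≤ ringDepth A := natCast_le_ringDepth_iff.2 fun i hi ↦ by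
    obtain hi | rfl := Nat.lt_succ_iff_lt_or_eq.1 hi
    · exact natCast_le_ringDepth_iff.1 hn.ge i hi
    · exact subsingleton
  rw [hn] at succ_le
  exact n.lt_succ_self.not_ge (by exact_mod_cast succ_le)

variable [IsNoetherianRing A]

theorem projDim_le_ringDepth (M : ModuleCat.{u} A) [Nontrivial M] [Module.Finite A M]
    (hM : projDim A M ≠ ⊤) : projDim A M ≤ ringDepth A := by
  obtain ⟨n, hn⟩ := ENat.ne_top_iff_exists.1 hM
  by_cases depth_eq_top : ringDepth A = ⊤
  · exact depth_eq_top ▸ le_top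
  obtain ⟨t, ht⟩ := ENat.ne_top_iff_exists.1 depth_eq_top
  have := nontrivial_ext_of_ringDepth_eq ht.symm
  obtain ⟨s, hs, -⟩ := exists_nontrivial_ext_of_projectiveDimension_eq annihilator_residueField.ge
    (natCast_le_ringDepth_iff.1 ht.le) M (projDim_eq_natCast_iff.1 hn.symm)
  rw [← hn, ← ht]
  exact Nat.cast_le.2 (by omega)

theorem exists_isRegular_of_le_ringDepth (hn : n ≤ ringDepth A) :
    ∃ rs : List A, rs.length = n ∧ RingTheory.Sequence.IsRegular A rs := by
  have : Module.Finite A (IsLocalRing.ResidueField A) :=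
    Module.Finite.of_surjective (Algebra.linearMap A _) IsLocalRing.residue_surjective
  obtain ⟨rs, length_rs, -, regular⟩ := ModuleCat.exists_isRegular_of_exists_subsingleton_ext
    (IsLocalRing.maximalIdeal A) n (ModuleCat.of A A)
    (by simpa using (Ideal.IsPrime.ne_top').lt_top) (ModuleCat.of A (IsLocalRing.ResidueField A))
    (by rw [Module.support_eq_zeroLocus, annihilator_residueField]) (natCast_le_ringDepth_iff.1 hn)
  exact ⟨rs, length_rs, regular⟩

theorem exists_projDim_eq_of_le_ringDepth (hn : n ≤ ringDepth A) :
    ∃ M : ModuleCat.{u} A, Nontrivial M ∧ Module.Finite A M ∧ projDim A M = n := by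
  obtain ⟨rs, rfl, regular⟩ := exists_isRegular_of_le_ringDepth hn
  let M := ModuleCat.of A (Shrink.{u} (A ⧸ Ideal.ofList rs))
  have projectiveDimension_M : projectiveDimension M = rs.length :=
    ModuleCat.projectiveDimension_quotient_eq_length rs regular
  have nontrivial : Nontrivial M := nontrivial_iff_not_hasProjectiveDimensionLT_zero.2 fun h ↦
    (projectiveDimension_eq_natCast_iff.1 projectiveDimension_M).2
      (hasProjectiveDimensionLT_of_ge M 0 _ (Nat.zero_le _))
  have finite : Module.Finite A M := Module.Finite.equiv (Shrink.linearEquiv A _).symm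
  exact ⟨M, nontrivial, finite, projDim_eq_natCast_iff.2 projectiveDimension_M⟩

end RingDepth

theorem smallFinitisticProjDim_eq_depth
    (A : Type u) [CommRing A] [IsNoetherianRing A] [IsLocalRing A] :
    sSup {d : ℕ∞ | ∃ M : ModuleCat.{u} A, Nontrivial M ∧ Module.Finite A M ∧
      projDim A M ≠ ⊤ ∧ projDim A M = d} = ringDepth A := by
  apply le_antisymm
  · refine sSup_le ?_
    rintro _ ⟨M, _, _, hM, rfl⟩
    exact projDim_le_ringDepth M hM
  · refine ENat.forall_natCast_le_iff_le.1 fun n hn ↦ ?_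
    obtain ⟨M, nontrivial, finite, hM⟩ := exists_projDim_eq_of_le_ringDepth hn
    exact le_sSup ⟨M, nontrivial, finite, hM ▸ ENat.natCast_ne_top n, hM⟩
end
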